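/- Let r ∈ (0,2). Then lim_{n→∞} (∫₀¹ |∑_{j=1}^{n} (1/√n) r_j(t)|^{r} dt)^{1/r} = √2 · (Γ((r+1)/2)/√π)^{1/r}. -/

import Mathlib

open MeasureTheory Real Filter

/-- The `j`-th Rademacher function, `r_j(t) = sgn(sin(2^j π t))`. -/
noncomputable def rademacher (j : ℕ) (t : ℝ) : ℝ :=
  Real.sign (Real.sin ((2 : ℝ) ^ j * Real.pi * t))

/-- `p₀ ∈ (1,2)` is the unique solution of `Γ((p₀+1)/2) = √π / 2`. -/
noncomputable def khintchineP0 : ℝ :=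
  sInf {p : ℝ | 1 < p ∧ p < 2 ∧ Real.Gamma ((p + 1) / 2) = Real.sqrt Real.pi / 2}

/-- The optimal constant `A_r` in the Khintchine inequality. -/
noncomputable def khintchineA (r : ℝ) : ℝ :=
  if r ≤ khintchineP0 then (2 : ℝ) ^ (1 / r - 1 / 2)
  else if r < 2 then
    (1 / Real.sqrt 2) * (Real.Gamma ((r + 1) / 2) / Real.sqrt Real.pi) ^ (-(1 / r))
  else 1

/-- The `ℓ_p` norm of a vector in `ℝⁿ` (for finite `p`). -/
noncomputable def lpNorm (p : ℝ) {n : ℕ} (x : Fin n → ℝ) : ℝ :=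
  (∑ i, |x i| ^ p) ^ (1 / p)

/-- The `ℓ_∞` norm of a vector in `ℝⁿ`. -/
noncomputable def linfNorm {n : ℕ} (x : Fin n → ℝ) : ℝ :=
  ⨆ i, |x i|

/-!
On the unit interval `r_{n+1} = r_1 ∘ Tⁿ`, where `T` is the doubling map. Since `T` preserves
Lebesgue measure and is independent of `r_1`, the Rademacher functions are independent fair signs,
and the central limit theorem gives `S_n / √n → N(0, 1)` in distribution. By Hoeffding's lemma the
sums `S_n / √n` are sub-Gaussian with constant `1`, so all their absolute moments are bounded in
`n`. This upgrades convergence in distribution to convergence of the `r`-th absolute moment, whose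
limit `E|N(0, 1)|^r = √2 ^ r Γ((r+1)/2) / √π` is a Gamma integral.
-/

open ProbabilityTheory
open scoped ENNReal NNReal Topology

section MomentConvergence

lemma abs_sub_max_min_le {K p : ℝ} (hK : 0 < K) (hp : 1 ≤ p) (x : ℝ) :
    |x - max (-K) (min x K)| ≤ K ^ (1 - p) * |x| ^ p := by
  have hle : |x - max (-K) (min x K)| ≤ |x| := by grind
  rcases le_or_gt |x| K with hx | hx
  · rw [min_eq_left (abs_le.mp hx).2, max_eq_right (abs_le.mp hx).1, sub_self, abs_zero]
    positivity
  · have hx0 : 0 < |x| := hK.trans hx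
    calc |x - max (-K) (min x K)| ≤ |x| := hle
      _ = |x| ^ (1 - p) * |x| ^ p := by rw [← rpow_add hx0, sub_add_cancel, rpow_one]
      _ ≤ K ^ (1 - p) * |x| ^ p :=
          mul_le_mul_of_nonneg_right (rpow_le_rpow_of_nonpos hK hx.le (by linarith))
            (by positivity)

lemma abs_integral_sub_integral_max_min_le {Ω : Type*} {mΩ : MeasurableSpace Ω} {P : Measure Ω}
    [IsFiniteMeasure P] {X : Ω → ℝ} {p : ℝ≥0} {K : ℝ} (hp : 1 ≤ p) (hK : 0 < K) (hX : MemLp X p P) :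
    |P[X] - ∫ ω, max (-K) (min (X ω) K) ∂P| ≤ K ^ (1 - p : ℝ) * ∫ ω, |X ω| ^ (p : ℝ) ∂P := by
  have hX1 : Integrable X P := hX.integrable (by exact_mod_cast hp)
  have hXp : Integrable (fun ω => |X ω| ^ (p : ℝ)) P :=
    hX.integrable_norm_rpow (by positivity) ENNReal.coe_ne_top
  have htrunc : Integrable (fun ω => max (-K) (min (X ω) K)) P :=
    (integrable_const (-K)).sup (hX1.inf (integrable_const K))
  rw [← integral_sub hX1 htrunc, ← integral_const_mul]
  exact abs_integral_le_integral_abs.trans (integral_mono (hX1.sub htrunc).abs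
    (hXp.const_mul _) fun ω => abs_sub_max_min_le hK (by exact_mod_cast hp) (X ω))

variable {ι Ω' : Type*} {Ω : ι → Type*} {m : ∀ i, MeasurableSpace (Ω i)}
  {P : ∀ i, Measure (Ω i)} [∀ i, IsProbabilityMeasure (P i)]
  {m' : MeasurableSpace Ω'} {P' : Measure Ω'} [IsProbabilityMeasure P'] {l : Filter ι}

lemma tendsto_integral_boundedContinuousFunction {E : Type*} [TopologicalSpace E]
    [MeasurableSpace E] [OpensMeasurableSpace E] {X : ∀ i, Ω i → E} {Z : Ω' → E}
    (h : TendstoInDistribution X l Z P P') (f : BoundedContinuousFunction E ℝ) :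
    Tendsto (fun i => ∫ ω, f (X i ω) ∂(P i)) l (𝓝 (∫ ω, f (Z ω) ∂P')) := by
  have hf := ProbabilityMeasure.tendsto_iff_forall_integral_tendsto.mp h.tendsto f
  simpa only [ProbabilityMeasure.coe_mk, integral_map (h.forall_aemeasurable _)
    f.continuous.measurable.aestronglyMeasurable, integral_map h.aemeasurable_limit
    f.continuous.measurable.aestronglyMeasurable] using hf

lemma tendsto_integral_of_tendstoInDistribution {X : ∀ i, Ω i → ℝ} {Z : Ω' → ℝ} {p : ℝ≥0} {C : ℝ}
    (h : TendstoInDistribution X l Z P P') (hp : 1 < p) (hX : ∀ i, MemLp (X i) p (P i))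
    (hC : ∀ i, ∫ ω, |X i ω| ^ (p : ℝ) ∂(P i) ≤ C) (hZ : MemLp Z p P') :
    Tendsto (fun i => (P i)[X i]) l (𝓝 P'[Z]) := by
  -- Truncating at level `K` costs `O(K ^ (1 - p))` uniformly in `i`, so the limits in `K` and `i`
  -- can be exchanged.
  have hvanish (D : ℝ) : Tendsto (fun K : ℝ => K ^ (1 - p : ℝ) * D) atTop (𝓝 0) := by
    have := tendsto_rpow_neg_atTop (sub_pos.mpr (NNReal.coe_lt_coe.mpr hp))
    simpa using this.mul_const D
  have htrunc (K : ℝ) (hK : 0 < K) :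
      Tendsto (fun i => ∫ ω, max (-K) (min (X i ω) K) ∂(P i)) l
        (𝓝 (∫ ω, max (-K) (min (Z ω) K) ∂P')) :=
    tendsto_integral_boundedContinuousFunction h
      (BoundedContinuousFunction.ofNormedAddCommGroup (fun x => max (-K) (min x K))
        (by fun_prop) K fun x => abs_le.mpr
          ⟨le_max_left _ _, max_le (by linarith) (min_le_right _ _)⟩)
  have hunif : TendstoUniformly (fun (K : ℝ) i => ∫ ω, max (-K) (min (X i ω) K) ∂(P i))
      (fun i => (P i)[X i]) atTop := by
    refine Metric.tendstoUniformly_iff.mpr fun ε hε => ?_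
    filter_upwards [eventually_gt_atTop 0, (hvanish C).eventually_lt_const hε] with K hK hKε i
    calc dist ((P i)[X i]) (∫ ω, max (-K) (min (X i ω) K) ∂(P i))
        ≤ K ^ (1 - p : ℝ) * ∫ ω, |X i ω| ^ (p : ℝ) ∂(P i) :=
          abs_integral_sub_integral_max_min_le hp.le hK (hX i)
      _ ≤ K ^ (1 - p : ℝ) * C := by gcongr; exact hC i
      _ < ε := hKε
  have hlimit : Tendsto (fun K : ℝ => ∫ ω, max (-K) (min (Z ω) K) ∂P') atTop (𝓝 P'[Z]) := by
    refine tendsto_iff_dist_tendsto_zero.mpr (squeeze_zero' (.of_forall fun _ => dist_nonneg) ?_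
      (hvanish (∫ ω, |Z ω| ^ (p : ℝ) ∂P')))
    filter_upwards [eventually_gt_atTop 0] with K hK
    rw [dist_comm]
    exact abs_integral_sub_integral_max_min_le hp.le hK hZ
  exact (hunif.tendstoUniformlyOnFilter.mono_right le_top).tendsto_of_eventually_tendsto
    ((eventually_gt_atTop 0).mono htrunc) hlimit

end MomentConvergence

section Iterates

variable {Ω β : Type*} {mΩ : MeasurableSpace Ω} {mβ : MeasurableSpace β} {P : Measure Ω}
  {T : Ω → Ω} {f : Ω → β}

lemma identDistrib_comp_iterate (hT : MeasurePreserving T P P) (hf : Measurable f) (n : ℕ) :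
    IdentDistrib (f ∘ T^[n]) f P P where
  aemeasurable_fst := (hf.comp (hT.iterate n).measurable).aemeasurable
  aemeasurable_snd := hf.aemeasurable
  map_eq := by rw [← Measure.map_map hf (hT.iterate n).measurable, (hT.iterate n).map_eq]

lemma measure_iInter_range_preimage_comp_iterate [IsProbabilityMeasure P]
    (hT : MeasurePreserving T P P) (hf : Measurable f) (hfT : IndepFun f T P) (n : ℕ)
    {B : ℕ → Set β} (hB : ∀ i, MeasurableSet (B i)) :
    P (⋂ i ∈ Finset.range n, (f ∘ T^[i]) ⁻¹' B i) =
      ∏ i ∈ Finset.range n, P ((f ∘ T^[i]) ⁻¹' B i) := by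
  induction n generalizing B with
  | zero => simp
  | succ n ih =>
    let A : Set Ω := ⋂ i ∈ Finset.range n, (f ∘ T^[i]) ⁻¹' B (i + 1)
    have hA : MeasurableSet A := Finset.measurableSet_biInter _ fun i _ =>
      (hf.comp (hT.iterate i).measurable) (hB (i + 1))
    have hsplit : ⋂ i ∈ Finset.range (n + 1), (f ∘ T^[i]) ⁻¹' B i = f ⁻¹' B 0 ∩ T ⁻¹' A := by
      ext ω
      simp only [A, Set.mem_iInter, Finset.mem_range, Set.mem_inter_iff, Set.mem_preimage,
        Nat.forall_lt_succ_left, Function.comp_apply, Function.iterate_zero, id_eq,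
        Function.iterate_succ]
    have hshift (i : ℕ) :
        P ((f ∘ T^[i + 1]) ⁻¹' B (i + 1)) = P ((f ∘ T^[i]) ⁻¹' B (i + 1)) := by
      rw [Function.iterate_succ, ← Function.comp_assoc, Set.preimage_comp,
        hT.measure_preimage ((hf.comp (hT.iterate i).measurable) (hB _)).nullMeasurableSet]
    rw [hsplit, hfT.measure_inter_preimage_eq_mul _ _ (hB 0) hA,
      hT.measure_preimage hA.nullMeasurableSet, ih fun i => hB (i + 1), Finset.prod_range_succ',
      mul_comm]
    simp only [hshift, Function.iterate_zero, Function.comp_id]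

lemma iIndepFun_comp_iterate [IsProbabilityMeasure P] (hT : MeasurePreserving T P P)
    (hf : Measurable f) (hfT : IndepFun f T P) : iIndepFun (fun n => f ∘ T^[n]) P := by
  classical
  refine iIndepFun_iff_measure_inter_preimage_eq_mul.mpr fun S B hB => ?_
  obtain ⟨n, hn⟩ := S.exists_nat_subset_range
  let B' : ℕ → Set β := fun i => if i ∈ S then B i else Set.univ
  have hB' (i : ℕ) : MeasurableSet (B' i) := by
    by_cases hi : i ∈ S <;> simp [B', hi, hB]
  have hBS : ∀ i ∈ S, B' i = B i := fun i hi => if_pos hi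
  have hBn : ∀ i ∉ S, B' i = Set.univ := fun i hi => if_neg hi
  calc P (⋂ i ∈ S, (f ∘ T^[i]) ⁻¹' B i)
      = P (⋂ i ∈ Finset.range n, (f ∘ T^[i]) ⁻¹' B' i) := by
        congr 1
        ext ω
        simp only [Set.mem_iInter]
        refine ⟨fun h i _ => ?_, fun h i hi => ?_⟩
        · by_cases hi : i ∈ S
          · simpa only [hBS i hi] using h i hi
          · simp only [hBn i hi, Set.preimage_univ, Set.mem_univ]
        · simpa only [hBS i hi] using h i (hn hi)
    _ = ∏ i ∈ Finset.range n, P ((f ∘ T^[i]) ⁻¹' B' i) :=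
        measure_iInter_range_preimage_comp_iterate hT hf hfT n hB'
    _ = ∏ i ∈ S, P ((f ∘ T^[i]) ⁻¹' B' i) :=
        (Finset.prod_subset hn fun i _ hi => by simp [hBn i hi]).symm
    _ = ∏ i ∈ S, P ((f ∘ T^[i]) ⁻¹' B i) := Finset.prod_congr rfl fun i hi => by rw [hBS i hi]

end Iterates

section Moments

variable {Ω : Type*} {mΩ : MeasurableSpace Ω} {P : Measure Ω}

lemma integrable_abs_rpow_of_hasSubgaussianMGF {X : Ω → ℝ} {c : ℝ≥0}
    (hX : HasSubgaussianMGF X c P) {p : ℝ} (hp : 0 ≤ p) : Integrable (fun ω => |X ω| ^ p) P :=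
  integrable_rpow_abs_of_mem_interior_integrableExpSet
    (by simp [hX.integrableExpSet_eq_univ]) hp

lemma memLp_two_abs_rpow_of_hasSubgaussianMGF {X : Ω → ℝ} {c : ℝ≥0}
    (hX : HasSubgaussianMGF X c P) {r : ℝ} (hr : 0 ≤ r) : MemLp (fun ω => |X ω| ^ r) 2 P := by
  refine (memLp_two_iff_integrable_sq
    (integrable_abs_rpow_of_hasSubgaussianMGF hX hr).aestronglyMeasurable).mpr ?_
  simpa only [← rpow_mul_natCast (abs_nonneg _)] using
    integrable_abs_rpow_of_hasSubgaussianMGF hX (p := r * (2 : ℕ)) (by positivity)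

lemma integral_abs_rpow_le_of_hasSubgaussianMGF {X : Ω → ℝ} {c : ℝ≥0}
    (hX : HasSubgaussianMGF X c P) {p : ℝ} (hp : 0 ≤ p) :
    ∫ ω, |X ω| ^ p ∂P ≤ p ^ p * (2 * exp (c / 2)) := by
  have hexp (t : ℝ) : Integrable (fun ω => exp (t * X ω)) P := hX.integrable_exp_mul t
  have hbound (x : ℝ) : |x| ^ p ≤ p ^ p * (exp (1 * x) + exp (-1 * x)) := by
    refine (rpow_abs_le_mul_max_exp x hp one_ne_zero).trans ?_
    rw [abs_one, div_one]
    gcongr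
    exact max_le_add_of_nonneg (exp_nonneg _) (exp_nonneg _)
  calc ∫ ω, |X ω| ^ p ∂P
      ≤ ∫ ω, p ^ p * (exp (1 * X ω) + exp (-1 * X ω)) ∂P :=
        integral_mono (integrable_abs_rpow_of_hasSubgaussianMGF hX hp)
          (((hexp 1).add (hexp (-1))).const_mul _) fun ω => hbound (X ω)
    _ = p ^ p * (mgf X P 1 + mgf X P (-1)) := by
        rw [integral_const_mul, integral_add (hexp 1) (hexp (-1))]
        rfl
    _ ≤ p ^ p * (exp (c / 2) + exp (c / 2)) := by
        gcongr
        · simpa using hX.mgf_le 1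
        · simpa using hX.mgf_le (-1)
    _ = p ^ p * (2 * exp (c / 2)) := by rw [two_mul]

lemma hasSubgaussianMGF_inv_sqrt_mul_sum {X : ℕ → Ω → ℝ} {c : ℝ≥0} (hindep : iIndepFun X P)
    (hX : ∀ i, HasSubgaussianMGF (X i) c P) (n : ℕ) :
    HasSubgaussianMGF (fun ω => (√n)⁻¹ * ∑ i ∈ Finset.range n, X i ω) c P := by
  have h := (HasSubgaussianMGF.sum_of_iIndepFun hindep
    (s := Finset.range n) fun i _ => hX i).const_mul (√n)⁻¹
  refine ⟨h.integrable_exp_mul, fun t => (h.mgf_le t).trans ?_⟩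
  have hn : ((√n)⁻¹) ^ 2 * (n * c) ≤ (c : ℝ) := by
    rw [inv_pow, sq_sqrt (Nat.cast_nonneg n), ← mul_assoc]
    exact mul_le_of_le_one_left c.coe_nonneg inv_mul_le_one
  simp only [Finset.sum_const, Finset.card_range, nsmul_eq_mul]
  gcongr
  exact hn

end Moments

lemma integral_abs_rpow_gaussianReal {r : ℝ} (hr : -1 < r) {v : ℝ≥0} (hv : v ≠ 0) :
    ∫ x, |x| ^ r ∂(gaussianReal 0 v) = √(2 * v) ^ r * (Gamma ((r + 1) / 2) / √π) := by
  have hv0 : (0 : ℝ) < 2 * v := by positivity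
  have hpow : (2 * v : ℝ)⁻¹ ^ (-(r + 1) / 2) = √(2 * v) ^ r * √(2 * v) := by
    rw [sqrt_eq_rpow, inv_rpow hv0.le, ← rpow_neg hv0.le, ← rpow_mul hv0.le, ← rpow_add hv0]
    ring_nf
  calc ∫ x, |x| ^ r ∂(gaussianReal 0 v)
      = ∫ x : ℝ, (√(2 * v * π))⁻¹ * (|x| ^ r * exp (-(2 * v : ℝ)⁻¹ * |x| ^ (2 : ℝ))) := by
        rw [integral_gaussianReal_eq_integral_smul hv]
        refine integral_congr_ae (ae_of_all _ fun x => ?_)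
        simp only [gaussianPDFReal, sub_zero, rpow_two, sq_abs, smul_eq_mul]
        rw [neg_div, div_eq_inv_mul (x ^ 2), neg_mul, mul_right_comm (2 : ℝ) π]
        ring
    _ = (√(2 * v * π))⁻¹ *
          (2 * ((2 * v : ℝ)⁻¹ ^ (-(r + 1) / 2) * (1 / 2) * Gamma ((r + 1) / 2))) := by
        rw [integral_const_mul,
          integral_comp_abs (f := fun y => y ^ r * exp (-(2 * v : ℝ)⁻¹ * y ^ (2 : ℝ))),
          integral_rpow_mul_exp_neg_mul_rpow two_pos hr (inv_pos.mpr hv0)]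
    _ = √(2 * v) ^ r * (Gamma ((r + 1) / 2) / √π) := by
        rw [hpow, sqrt_mul hv0.le]
        field_simp

lemma hasSubgaussianMGF_id_gaussianReal (v : ℝ≥0) :
    HasSubgaussianMGF id v (gaussianReal 0 v) where
  integrable_exp_mul := integrable_exp_mul_gaussianReal
  mgf_le t := by simp [mgf_id_gaussianReal]

theorem tendsto_integral_abs_rpow_inv_sqrt_mul_sum {Ω : Type*} {mΩ : MeasurableSpace Ω}
    {P : Measure Ω} [IsProbabilityMeasure P] {X : ℕ → Ω → ℝ} {c : ℝ≥0} {r : ℝ} (hr : 0 ≤ r)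
    (h0 : P[X 0] = 0) (h1 : P[X 0 ^ 2] = 1) (hindep : iIndepFun X P)
    (hident : ∀ i, IdentDistrib (X i) (X 0) P P) (hX : HasSubgaussianMGF (X 0) c P) :
    Tendsto (fun n : ℕ => ∫ ω, |(√n)⁻¹ * ∑ i ∈ Finset.range n, X i ω| ^ r ∂P) atTop
      (𝓝 (∫ x, |x| ^ r ∂(gaussianReal 0 1))) := by
  have hsum := hasSubgaussianMGF_inv_sqrt_mul_sum hindep fun i =>
    hX.congr_identDistrib (hident i).symm
  have hclt := (tendstoInDistribution_inv_sqrt_mul_sum (HasLaw.id (μ := gaussianReal 0 1)) h0 h1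
    hindep hident).continuous_comp (continuous_abs.rpow_const fun _ => Or.inr hr)
  refine tendsto_integral_of_tendstoInDistribution (p := 2)
    (C := (r * 2) ^ (r * 2) * (2 * exp (c / 2))) hclt one_lt_two
    (fun n => memLp_two_abs_rpow_of_hasSubgaussianMGF (hsum n) hr) (fun n => ?_)
    (memLp_two_abs_rpow_of_hasSubgaussianMGF (hasSubgaussianMGF_id_gaussianReal 1) hr)
  have hsq (x : ℝ) : |(|x| ^ r)| ^ ((2 : ℝ≥0) : ℝ) = |x| ^ (r * 2) := by
    rw [abs_of_nonneg (by positivity), NNReal.coe_ofNat, rpow_mul (abs_nonneg x)]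
  simp only [hsq]
  exact integral_abs_rpow_le_of_hasSubgaussianMGF (hsum n) (by positivity)

lemma map_restrict_prodMk_of_eqOn {α β γ : Type*} [MeasurableSpace α] [MeasurableSpace β]
    [MeasurableSpace γ] {μ : Measure α} [SFinite μ] {s : Set α} (hs : MeasurableSet s) {f : α → β}
    {g : α → γ} {b : β} (hf : Set.EqOn f (fun _ => b) s) (hg : Measurable g) :
    (μ.restrict s).map (fun x => (f x, g x)) = (Measure.dirac b).prod ((μ.restrict s).map g) := by
  rw [Measure.dirac_prod, Measure.map_map measurable_prodMk_left hg]
  refine Measure.map_congr ((ae_restrict_iff' hs).mpr (ae_of_all _ fun x hx => ?_))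
  simp only [hf hx, Function.comp_apply]

/-- The uniform distribution on the unit interval, as the probability space on which the Rademacher
functions live. The open interval is used so that, up to a null set, it is the union of the two open
halves on which `rademacher 1` is constant. -/
noncomputable abbrev unitUniform : Measure ℝ := volume.restrict (Set.Ioo 0 1)

instance : IsProbabilityMeasure unitUniform := ⟨by simp⟩

/-- The Rademacher distribution: the law of a fair random sign. -/
noncomputable def rademacherDist : Measure ℝ :=
  (2⁻¹ : ℝ≥0∞) • (Measure.dirac 1 + Measure.dirac (-1))

instance : IsProbabilityMeasure rademacherDist :=
  ⟨by simp [rademacherDist, ENNReal.inv_two_add_inv_two]⟩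

/-- The doubling map on the unit interval: it shifts binary digits, hence shifts the sequence of
Rademacher functions. -/
noncomputable def doublingMap (t : ℝ) : ℝ := Int.fract (2 * t)

lemma measurable_doublingMap : Measurable doublingMap :=
  measurable_fract.comp (measurable_const_mul 2)

lemma measurable_rademacher (j : ℕ) : Measurable (rademacher j) := by
  have hsign : Measurable Real.sign :=
    Measurable.ite measurableSet_Iio measurable_const
      (Measurable.ite measurableSet_Ioi measurable_const measurable_const)
  exact hsign.comp (by fun_prop)

lemma rademacher_one_eq_one {t : ℝ} (ht : t ∈ Set.Ioo (0 : ℝ) (1 / 2)) : rademacher 1 t = 1 := by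
  refine Real.sign_of_pos (sin_pos_of_pos_of_lt_pi ?_ ?_)
  · have := ht.1
    positivity
  · nlinarith [ht.2, pi_pos]

lemma rademacher_one_eq_neg_one {t : ℝ} (ht : t ∈ Set.Ioo (1 / 2 : ℝ) 1) :
    rademacher 1 t = -1 := by
  refine Real.sign_of_neg ?_
  rw [← sin_sub_two_pi]
  refine sin_neg_of_neg_of_neg_pi_lt ?_ ?_
  · nlinarith [ht.2, pi_pos]
  · nlinarith [ht.1, pi_pos]

lemma rademacher_succ_doublingMap (j : ℕ) (t : ℝ) :
    rademacher (j + 1) (doublingMap t) = rademacher (j + 2) t := by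
  have harg : (2 : ℝ) ^ (j + 1) * π * doublingMap t =
      2 ^ (j + 2) * π * t - (2 ^ j * ⌊2 * t⌋ : ℤ) * (2 * π) := by
    rw [doublingMap, Int.fract]
    push_cast
    ring
  rw [rademacher, rademacher, harg, sin_sub_int_mul_two_pi]

lemma rademacher_succ_eq_comp_iterate (n : ℕ) :
    rademacher (n + 1) = rademacher 1 ∘ doublingMap^[n] := by
  induction n with
  | zero => rfl
  | succ n ih =>
    rw [Function.iterate_succ, ← Function.comp_assoc, ← ih]
    exact funext fun t => (rademacher_succ_doublingMap n t).symm

lemma map_doublingMap_restrict_Ioo (k : ℤ) :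
    (volume.restrict (Set.Ioo (k / 2 : ℝ) ((k + 1) / 2))).map doublingMap =
      (2⁻¹ : ℝ≥0∞) • unitUniform := by
  ext A hA
  have hset : doublingMap ⁻¹' A ∩ Set.Ioo (k / 2 : ℝ) ((k + 1) / 2) =
      (fun t => 2 * t) ⁻¹' ((fun t => t + (-k : ℝ)) ⁻¹' (A ∩ Set.Ioo 0 1)) := by
    ext t
    have hmem : t ∈ Set.Ioo (k / 2 : ℝ) ((k + 1) / 2) ↔ 2 * t + -k ∈ Set.Ioo (0 : ℝ) 1 := by
      constructor <;> rintro ⟨h₁, h₂⟩ <;> constructor <;> linarith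
    have hfract (ht : 2 * t + -k ∈ Set.Ioo (0 : ℝ) 1) : doublingMap t = 2 * t + -k :=
      Int.fract_eq_iff.mpr ⟨ht.1.le, ht.2, k, by ring⟩
    simp only [Set.mem_inter_iff, Set.mem_preimage, hmem]
    exact and_congr_left fun ht => by rw [hfract ht]
  have hhalf : ENNReal.ofReal |(2 : ℝ)⁻¹| = 2⁻¹ := by
    rw [abs_of_pos (by norm_num), ENNReal.ofReal_inv_of_pos two_pos, ENNReal.ofReal_ofNat]
  rw [Measure.map_apply measurable_doublingMap hA, Measure.restrict_apply
    (measurable_doublingMap hA), hset, volume_preimage_mul_left two_ne_zero,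
    measure_preimage_add_right, Measure.smul_apply, Measure.restrict_apply hA, smul_eq_mul, hhalf]

lemma unitUniform_eq_restrict_add_restrict :
    unitUniform = volume.restrict (Set.Ioo 0 (1 / 2)) + volume.restrict (Set.Ioo (1 / 2) 1) := by
  rw [unitUniform, ← Set.Ioc_union_Ioo_eq_Ioo (b := (1 / 2 : ℝ)) (by norm_num) (by norm_num),
    Measure.restrict_union (Set.disjoint_left.mpr fun t h₁ h₂ => h₂.1.not_ge h₁.2)
      measurableSet_Ioo, Measure.restrict_congr_set Ioo_ae_eq_Ioc.symm]

lemma map_rademacher_one_prodMk_doublingMap :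
    unitUniform.map (fun t => (rademacher 1 t, doublingMap t)) =
      rademacherDist.prod unitUniform := by
  have hpair : Measurable fun t => (rademacher 1 t, doublingMap t) :=
    (measurable_rademacher 1).prodMk measurable_doublingMap
  have hleft : (volume.restrict (Set.Ioo (0 : ℝ) (1 / 2))).map doublingMap =
      (2⁻¹ : ℝ≥0∞) • unitUniform := by
    simpa using map_doublingMap_restrict_Ioo 0
  have hright : (volume.restrict (Set.Ioo (1 / 2 : ℝ) 1)).map doublingMap =
      (2⁻¹ : ℝ≥0∞) • unitUniform := by
    simpa [one_add_one_eq_two] using map_doublingMap_restrict_Ioo 1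
  conv_lhs => rw [unitUniform_eq_restrict_add_restrict]
  rw [Measure.map_add _ _ hpair,
    map_restrict_prodMk_of_eqOn measurableSet_Ioo (fun t ht => rademacher_one_eq_one ht)
      measurable_doublingMap,
    map_restrict_prodMk_of_eqOn measurableSet_Ioo (fun t ht => rademacher_one_eq_neg_one ht)
      measurable_doublingMap, hleft, hright,
    rademacherDist, Measure.prod_smul_right, Measure.prod_smul_right, Measure.prod_smul_left,
    Measure.add_prod, smul_add]

lemma hasLaw_rademacher_one : HasLaw (rademacher 1) rademacherDist unitUniform where
  aemeasurable := (measurable_rademacher 1).aemeasurable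
  map_eq := by
    rw [← Measure.fst_prod (μ := rademacherDist) (ν := unitUniform),
      ← map_rademacher_one_prodMk_doublingMap, Measure.fst_map_prodMk measurable_doublingMap]

lemma measurePreserving_doublingMap : MeasurePreserving doublingMap unitUniform unitUniform where
  measurable := measurable_doublingMap
  map_eq := by
    rw [← Measure.snd_map_prodMk (measurable_rademacher 1), map_rademacher_one_prodMk_doublingMap,
      Measure.snd_prod]

lemma indepFun_rademacher_one_doublingMap :
    IndepFun (rademacher 1) doublingMap unitUniform := by
  rw [indepFun_iff_map_prod_eq_prod_map_map (measurable_rademacher 1).aemeasurable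
    measurable_doublingMap.aemeasurable, map_rademacher_one_prodMk_doublingMap,
    hasLaw_rademacher_one.map_eq, measurePreserving_doublingMap.map_eq]

theorem iIndepFun_rademacher : iIndepFun (fun n => rademacher (n + 1)) unitUniform := by
  rw [funext rademacher_succ_eq_comp_iterate]
  exact iIndepFun_comp_iterate measurePreserving_doublingMap (measurable_rademacher 1)
    indepFun_rademacher_one_doublingMap

lemma identDistrib_rademacher_succ (n : ℕ) :
    IdentDistrib (rademacher (n + 1)) (rademacher 1) unitUniform unitUniform := by
  rw [rademacher_succ_eq_comp_iterate]
  exact identDistrib_comp_iterate measurePreserving_doublingMap (measurable_rademacher 1) n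

lemma integral_rademacherDist (f : ℝ → ℝ) :
    ∫ x, f x ∂rademacherDist = (f 1 + f (-1)) / 2 := by
  rw [rademacherDist, integral_smul_measure,
    integral_add_measure (integrable_dirac (by simp)) (integrable_dirac (by simp)),
    integral_dirac, integral_dirac, ENNReal.toReal_inv, ENNReal.toReal_ofNat, smul_eq_mul]
  ring

lemma integral_rademacher_one : ∫ t, rademacher 1 t ∂unitUniform = 0 := by
  rw [hasLaw_rademacher_one.integral_eq, integral_rademacherDist (fun x => x)]
  norm_num

lemma integral_rademacher_one_sq : ∫ t, (rademacher 1 ^ 2) t ∂unitUniform = 1 := by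
  calc ∫ t, (rademacher 1 ^ 2) t ∂unitUniform = ∫ x, x ^ 2 ∂rademacherDist :=
        hasLaw_rademacher_one.integral_comp (f := fun x => x ^ 2) (by fun_prop)
    _ = 1 := by
        rw [integral_rademacherDist]
        norm_num

lemma hasSubgaussianMGF_rademacher_one : HasSubgaussianMGF (rademacher 1) 1 unitUniform := by
  have hmem : ∀ᵐ t ∂unitUniform, rademacher 1 t ∈ Set.Icc (-1 : ℝ) 1 := ae_of_all _ fun t => by
    rw [rademacher]
    rcases Real.sign_apply_eq (sin (2 ^ 1 * π * t)) with h | h | h <;> rw [h] <;> norm_num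
  convert hasSubgaussianMGF_of_mem_Icc_of_integral_eq_zero
    (measurable_rademacher 1).aemeasurable hmem integral_rademacher_one
  norm_num

theorem rademacher_clt_limit_general (r : ℝ) (hr : 0 < r) :
    Tendsto (fun n : ℕ =>
        (∫ t in Set.Icc (0 : ℝ) 1,
          |∑ j : Fin n, (1 / Real.sqrt n) * rademacher (j.1 + 1) t| ^ r) ^ (1 / r))
      atTop
      (nhds (Real.sqrt 2 * (Real.Gamma ((r + 1) / 2) / Real.sqrt Real.pi) ^ (1 / r))) := by
  have hmoment := tendsto_integral_abs_rpow_inv_sqrt_mul_sum hr.le integral_rademacher_one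
    integral_rademacher_one_sq iIndepFun_rademacher identDistrib_rademacher_succ
    hasSubgaussianMGF_rademacher_one
  have hlimit : (∫ x, |x| ^ r ∂(gaussianReal 0 1)) ^ (1 / r) =
      √2 * (Gamma ((r + 1) / 2) / √π) ^ (1 / r) := by
    rw [integral_abs_rpow_gaussianReal (by linarith) one_ne_zero, NNReal.coe_one, mul_one,
      mul_rpow (by positivity) (by positivity), one_div, rpow_rpow_inv (by positivity) hr.ne']
  rw [← hlimit]
  refine (hmoment.rpow_const (Or.inr (by positivity))).congr fun n => ?_
  simp only [integral_Icc_eq_integral_Ioo, Finset.mul_sum, Finset.sum_range, one_div]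

/-- Haagerup's central limit computation: the `L_r` norm of the normalized Rademacher sums
converges to `√2 (Γ((r+1)/2)/√π)^{1/r}`. -/
theorem rademacher_clt_limit (r : ℝ) (hr0 : 0 < r) (hr2 : r < 2) :
    Tendsto (fun n : ℕ =>
        (∫ t in Set.Icc (0 : ℝ) 1,
          |∑ j : Fin n, (1 / Real.sqrt n) * rademacher (j.1 + 1) t| ^ r) ^ (1 / r))
      atTop
      (nhds (Real.sqrt 2 * (Real.Gamma ((r + 1) / 2) / Real.sqrt Real.pi) ^ (1 / r))) :=
  rademacher_clt_limit_general r hr0
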